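/- There exists a constant s > 0 such that, for the planar rancher process (x_n), almost surely limsup_{n→∞} ‖x_n‖/n ≥ s. -/

import Mathlib

open MeasureTheory Filter Real

/-- The unit vector in the plane at angle `θ`. -/
noncomputable def unitDir (θ : ℝ) : EuclideanSpace ℝ (Fin 2) :=
  (WithLp.equiv 2 (Fin 2 → ℝ)).symm ![Real.cos θ, Real.sin θ]

/-- The set of angles `θ ∈ [0, 2π)` such that the unit step from `xₙ` in
direction `θ` does not intersect the interior of the convex hull of
`{x₀, …, xₙ}` (the ranch).  The points `y` at distance `1` from `xₙ` are
exactly the points `xₙ + unitDir θ`, `θ ∈ [0, 2π)`. -/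
noncomputable def rancherAngles {Ω : Type*} (x : ℕ → Ω → EuclideanSpace ℝ (Fin 2))
    (n : ℕ) (ω : Ω) : Set ℝ :=
  {θ : ℝ | θ ∈ Set.Ico 0 (2 * π) ∧
    segment ℝ (x n ω) (x n ω + unitDir θ) ∩
      interior (convexHull ℝ (Set.range fun i : Fin (n + 1) => x i ω)) = ∅}

/-- The normalized arc-length (uniform) measure on the set of allowed
positions for `x_{n+1}`:  the push-forward under `θ ↦ xₙ + unitDir θ` of the
normalized restriction of Lebesgue measure to the allowed angles. -/
noncomputable def rancherStep {Ω : Type*} (x : ℕ → Ω → EuclideanSpace ℝ (Fin 2))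
    (n : ℕ) (ω : Ω) : Measure (EuclideanSpace ℝ (Fin 2)) :=
  (volume (rancherAngles x n ω))⁻¹ •
    (volume.restrict (rancherAngles x n ω)).map fun θ => x n ω + unitDir θ

/-! For points `a`, `p` of the ranch, the potential of the chord `ap` at the rancher's position is a
weighted sum of the length of the chord, of the distances to its endpoints and of the distance to
the line through them. The directions forbidden to the rancher at `x` form an arc `(M - h, M + h)`
with `h ≤ π / 2`, so the mean step is a nonpositive multiple of `unitDir M`, and all points of the
ranch lie in the cone of directions at angle at most `h` from `unitDir M`. If the chord has maximal
potential, its endpoints are seen from `x` under an angle bounded below; hence `sin h` is bounded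
below, the mean step moves away from the chord, and by convexity the potential of that chord, and
with it the largest potential, increases by a fixed amount on average. (If the ranch has no
interior, the step is uniform on the circle and the convexity of the distance to its line
gives the drift.) Since increments are bounded, the exponential of a small negative multiple of the
largest potential contracts in mean, so by Borel–Cantelli the largest potential grows linearly. It
is at most a multiple of the largest `‖x i‖` with `i ≤ n`. -/

open ProbabilityTheory Module
open scoped RealInnerProductSpace EuclideanSpace

/-! ### Moment bounds and conditional laws -/

theorem le_limsup_div_natCast {z : ℕ → ℝ} {b c : ℝ} (hc : 0 < c) (hz : ∀ n, z n ≤ b + n)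
    (h : ∀ᶠ n : ℕ in atTop, ∃ i ≤ n, c * n ≤ z i) : c ≤ atTop.limsup fun n => z n / n := by
  refine le_limsup_of_frequently_le (frequently_atTop.mpr fun N => ?_)
    (isBoundedUnder_of_eventually_le (a := |b| + 1) ?_)
  · have hlarge : ∀ᶠ n : ℕ in atTop, b + (N + 1) ≤ c * n :=
      (tendsto_natCast_atTop_atTop.const_mul_atTop hc).eventually_ge_atTop _
    obtain ⟨n, ⟨i, hin, hi⟩, hn⟩ := (h.and hlarge).exists
    have hNi : N + 1 ≤ i := by
      have : (N + 1 : ℝ) ≤ i := by linarith [hz i]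
      exact_mod_cast this
    refine ⟨i, (Nat.le_succ N).trans hNi, ?_⟩
    rw [le_div_iff₀ (by exact_mod_cast (Nat.succ_pos N).trans_le hNi)]
    refine le_trans ?_ hi
    gcongr
  · filter_upwards [eventually_ge_atTop 1] with n hn
    have hn' : (1 : ℝ) ≤ n := by exact_mod_cast hn
    rw [div_le_iff₀ (by linarith)]
    nlinarith [hz n, le_abs_self b, abs_nonneg b]

theorem norm_le_norm_zero_add_of_dist_succ_eq_one {E : Type*} [SeminormedAddCommGroup E]
    {z : ℕ → E} (hz : ∀ n, dist (z n) (z (n + 1)) = 1) (n : ℕ) : ‖z n‖ ≤ ‖z 0‖ + n := by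
  have hdist : dist (z 0) (z n) ≤ n := by
    simpa [hz] using dist_le_range_sum_dist z n
  rw [dist_eq_norm] at hdist
  exact (norm_le_norm_add_norm_sub (z 0) (z n)).trans (by gcongr)

section Probability

variable {Ω : Type*} {m m0 : MeasurableSpace Ω} {μ : Measure Ω}

theorem ae_eventually_lt_pow_of_integral_le [IsFiniteMeasure μ] {Z : ℕ → Ω → ℝ} {C r ρ : ℝ}
    (hZ : ∀ n ω, 0 ≤ Z n ω) (hint : ∀ n, Integrable (Z n) μ) (hr : 0 ≤ r) (hrρ : r < ρ)
    (h : ∀ n, ∫ ω, Z n ω ∂μ ≤ C * r ^ n) : ∀ᵐ ω ∂μ, ∀ᶠ n in atTop, Z n ω < ρ ^ n := by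
  have hρ : 0 < ρ := hr.trans_lt hrρ
  have markov (n : ℕ) : μ {ω | ρ ^ n ≤ Z n ω} ≤ ENNReal.ofReal (C * (r / ρ) ^ n) := by
    rw [← ofReal_measureReal]
    refine ENNReal.ofReal_le_ofReal ?_
    rw [div_pow, ← mul_div_assoc, le_div_iff₀' (pow_pos hρ n)]
    exact (mul_meas_ge_le_integral_of_nonneg (ae_of_all _ (hZ n)) (hint n) _).trans (h n)
  have summable : Summable fun n : ℕ => C * (r / ρ) ^ n :=
    (summable_geometric_of_lt_one (by positivity) ((div_lt_one hρ).mpr hrρ)).mul_left C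
  filter_upwards [ae_eventually_notMem (ne_top_of_le_ne_top summable.tsum_ofReal_ne_top
    (ENNReal.tsum_le_tsum markov))] with ω hω
  exact hω.mono fun n hn => not_le.mp hn

theorem integral_exp_neg_mul_le {ν : Measure Ω} [IsFiniteMeasure ν] {f : Ω → ℝ} {B l : ℝ}
    (hf : Integrable f ν) (hB : ∀ ω, |f ω| ≤ B) (hl : 0 ≤ l) (hlB : l * B ≤ 1) :
    ∫ ω, exp (-l * f ω) ∂ν ≤ (1 + (l * B) ^ 2) * ν.real Set.univ - l * ∫ ω, f ω ∂ν := by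
  have pointwise (ω : Ω) : exp (-l * f ω) ≤ 1 + (l * B) ^ 2 - l * f ω := by
    have hle : |-l * f ω| ≤ l * B := by
      rw [abs_mul, abs_neg, abs_of_nonneg hl]
      exact mul_le_mul_of_nonneg_left (hB ω) hl
    have := (abs_le.mp (abs_exp_sub_one_sub_id_le (hle.trans hlB))).2
    linarith [sq_le_sq' (abs_le.mp hle).1 (abs_le.mp hle).2]
  have hint : Integrable (fun ω => 1 + (l * B) ^ 2 - l * f ω) ν :=
    (integrable_const _).sub (hf.const_mul l)
  refine (integral_mono_of_nonneg (ae_of_all _ fun ω => (exp_pos _).le) hint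
    (ae_of_all _ pointwise)).trans_eq ?_
  rw [integral_sub (integrable_const _) (hf.const_mul l), integral_const, integral_const_mul,
    smul_eq_mul, mul_comm]

variable {E : Type*} [MeasurableSpace E]

theorem ae_measure_eq_of_forall_ae_eq [MeasurableSpace.CountablyGenerated E]
    {κ ν : Ω → Measure E} [∀ ω, IsFiniteMeasure (κ ω)]
    (h : ∀ s, MeasurableSet s → ∀ᵐ ω ∂μ, κ ω s = ν ω s) : κ =ᵐ[μ] ν := by
  let 𝒜 := generateSetAlgebra (MeasurableSpace.countableGeneratingSet E)
  have hgen : MeasurableSpace.generateFrom 𝒜 = ‹MeasurableSpace E› :=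
    generateFrom_generateSetAlgebra_eq.trans MeasurableSpace.generateFrom_countableGeneratingSet
  have hcount : 𝒜.Countable :=
    countable_generateSetAlgebra MeasurableSpace.countable_countableGeneratingSet
  have hmeas (s : Set E) (hs : s ∈ 𝒜) : MeasurableSet s :=
    hgen ▸ MeasurableSpace.measurableSet_generateFrom hs
  filter_upwards [(ae_ball_iff hcount).mpr fun s hs => h s (hmeas s hs), h _ .univ] with ω h1 h2
  refine ext_of_generate_finite _ hgen.symm (fun s hs t ht _ => ?_) h1 h2
  exact isSetAlgebra_generateSetAlgebra.inter_mem hs ht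

variable [StandardBorelSpace E] [Nonempty E] [IsFiniteMeasure μ]

theorem condDistrib_ae_eq_of_condExp {β : Type*} [mβ : MeasurableSpace β] {X : Ω → β} {Y : Ω → E}
    (hX : Measurable X) (hY : Measurable Y) {ν : Ω → Measure E} [∀ ω, IsFiniteMeasure (ν ω)]
    (h : ∀ s, MeasurableSet s → μ⟦Y ⁻¹' s | mβ.comap X⟧ =ᵐ[μ] fun ω => (ν ω).real s) :
    (fun ω => condDistrib Y X μ (X ω)) =ᵐ[μ] ν :=
  ae_measure_eq_of_forall_ae_eq fun s hs => by
    filter_upwards [(condDistrib_ae_eq_condExp hX hY hs).trans (h s hs)] with ω hω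
    exact (measureReal_eq_measureReal_iff).mp hω

/- Conditioning on `m` is conditioning on the identity map into `(Ω, m)`, which makes the
conditional distribution of `Y` given an arbitrary sub-σ-algebra available. -/
theorem condExp_prod_ae_eq_integral {β : Type*} [MeasurableSpace β]
    (hm : m ≤ m0) {X : Ω → β} {Y : Ω → E} (hX : Measurable[m] X) (hY : Measurable Y)
    {ν : Ω → Measure E} [∀ ω, IsFiniteMeasure (ν ω)]
    (h : ∀ s, MeasurableSet s → μ⟦Y ⁻¹' s | m⟧ =ᵐ[μ] fun ω => (ν ω).real s)
    {F : β × E → ℝ} (hF : Measurable F) (hint : Integrable (fun ω => F (X ω, Y ω)) μ) :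
    μ[fun ω => F (X ω, Y ω) | m] =ᵐ[μ] fun ω => ∫ y, F (X ω, y) ∂ν ω := by
  have hid : @Measurable Ω Ω m0 m id := measurable_id'' hm
  have hFX : @Measurable (Ω × E) ℝ (m.prod inferInstance) _ fun q => F (X q.1, q.2) :=
    hF.comp ((hX.comp (@measurable_fst Ω E m _)).prodMk (@measurable_snd Ω E m _))
  have hcond := condExp_prod_ae_eq_integral_condDistrib (mβ := m) hid hY.aemeasurable
    hFX.stronglyMeasurable hint
  rw [MeasurableSpace.comap_id] at hcond
  have hdistrib := condDistrib_ae_eq_of_condExp (mβ := m) hid hY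
    (by rwa [MeasurableSpace.comap_id])
  filter_upwards [hcond, hdistrib] with ω h1 h2
  rw [← h2]
  exact h1

theorem ae_prodMk_mem_of_condExp {β : Type*} [MeasurableSpace β]
    (hm : m ≤ m0) {X : Ω → β} {Y : Ω → E} (hX : Measurable[m] X) (hY : Measurable Y)
    {ν : Ω → Measure E} [∀ ω, IsFiniteMeasure (ν ω)]
    (h : ∀ s, MeasurableSet s → μ⟦Y ⁻¹' s | m⟧ =ᵐ[μ] fun ω => (ν ω).real s)
    {S : Set (β × E)} (hS : MeasurableSet S) (hν : ∀ ω, ∀ᵐ y ∂ν ω, (X ω, y) ∈ S) :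
    ∀ᵐ ω ∂μ, (X ω, Y ω) ∈ S := by
  have hXY : Measurable fun ω => (X ω, Y ω) := (hX.mono hm le_rfl).prodMk hY
  have hF : Measurable (Sᶜ.indicator fun _ => (1 : ℝ)) := measurable_const.indicator hS.compl
  have hint : Integrable (fun ω => Sᶜ.indicator (fun _ => (1 : ℝ)) (X ω, Y ω)) μ :=
    (integrable_const (1 : ℝ)).indicator (hXY hS.compl)
  have hzero (ω : Ω) : ∫ y, Sᶜ.indicator (fun _ => (1 : ℝ)) (X ω, y) ∂ν ω = 0 :=
    integral_eq_zero_of_ae <| (hν ω).mono fun y hy => Set.indicator_of_notMem (not_not.mpr hy) _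
  have hreal : μ.real ((fun ω => (X ω, Y ω)) ⁻¹' Sᶜ) = 0 := by
    calc μ.real ((fun ω => (X ω, Y ω)) ⁻¹' Sᶜ)
        = ∫ ω, Sᶜ.indicator (fun _ => (1 : ℝ)) (X ω, Y ω) ∂μ :=
          (integral_indicator_one (hXY hS.compl)).symm
      _ = ∫ ω, ∫ y, Sᶜ.indicator (fun _ => (1 : ℝ)) (X ω, y) ∂ν ω ∂μ := by
          rw [← integral_condExp hm]
          exact integral_congr_ae (condExp_prod_ae_eq_integral hm hX hY h hF hint)
      _ = 0 := by simp only [hzero, integral_zero]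
  rw [measureReal_eq_zero_iff, measure_eq_zero_iff_ae_notMem] at hreal
  exact hreal.mono fun ω hω => not_not.mp hω

end Probability

/-! ### Directions entering a convex set -/

section Cone

variable {E : Type*} [AddCommGroup E] [Module ℝ E] [TopologicalSpace E] {K : Set E} {x : E}

/-- The cone of directions that lead from `x` into the interior of `K`. -/
def interiorCone (K : Set E) (x : E) : ConvexCone ℝ E :=
  ConvexCone.hull ℝ ((x + ·) ⁻¹' interior K)

theorem sub_mem_interiorCone {y : E} (hy : y ∈ interior K) : y - x ∈ interiorCone K x :=
  ConvexCone.subset_hull (by simpa using hy)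

variable [IsTopologicalAddGroup E] [ContinuousConstSMul ℝ E]

theorem mem_interiorCone (hK : Convex ℝ K) {v : E} :
    v ∈ interiorCone K x ↔ ∃ s : ℝ, 0 < s ∧ x + s • v ∈ interior K := by
  refine (ConvexCone.mem_hull_of_convex (hK.interior.translate_preimage_right x)).trans
    ⟨fun ⟨r, hr, hv⟩ => ⟨r⁻¹, inv_pos.mpr hr, ?_⟩, fun ⟨s, hs, hv⟩ => ⟨s⁻¹, inv_pos.mpr hs, ?_⟩⟩
  · exact (Set.mem_smul_set_iff_inv_smul_mem₀ hr.ne' _ _).mp hv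
  · exact (Set.mem_smul_set_iff_inv_smul_mem₀ (inv_pos.mpr hs).ne' _ _).mpr (by simpa using hv)

theorem isOpen_interiorCone (hK : Convex ℝ K) : IsOpen (interiorCone K x : Set E) := by
  have : (interiorCone K x : Set E) = ⋃ s ∈ Set.Ioi (0 : ℝ), (x + s • ·) ⁻¹' interior K := by
    ext v
    simp [mem_interiorCone hK]
  rw [this]
  exact isOpen_biUnion fun s _ =>
    isOpen_interior.preimage (continuous_const.add (continuous_const_smul s))

theorem zero_notMem_interiorCone (hK : Convex ℝ K) (hx : x ∉ interior K) :
    0 ∉ interiorCone K x := by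
  simp [mem_interiorCone hK, hx]

theorem segment_inter_interior_eq_empty_iff (hK : Convex ℝ K) (hxK : x ∈ K) (hx : x ∉ interior K)
    {u : E} : segment ℝ x (x + u) ∩ interior K = ∅ ↔ u ∉ interiorCone K x := by
  rw [← Set.not_nonempty_iff_eq_empty, not_iff_not, segment_eq_image', mem_interiorCone hK,
    add_sub_cancel_left]
  constructor
  · rintro ⟨_, ⟨s, hs, rfl⟩, h⟩
    refine ⟨s, hs.1.lt_of_ne ?_, h⟩
    rintro rfl
    simp [hx] at h
  · rintro ⟨s, hs, h⟩
    have hmin : min s 1 / s ∈ Set.Ioc (0 : ℝ) 1 :=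
      ⟨by positivity, (div_le_one hs).mpr (min_le_left s 1)⟩
    refine ⟨_, ⟨min s 1, ⟨by positivity, min_le_right s 1⟩, rfl⟩, ?_⟩
    simpa [smul_smul, div_mul_cancel₀ _ hs.ne'] using hK.add_smul_mem_interior hxK h hmin

end Cone

theorem exists_eq_Ioo_of_isOpen_of_ordConnected {s : Set ℝ} (ho : IsOpen s)
    (hs : s.OrdConnected) (hne : s.Nonempty) (hb : BddBelow s) (ha : BddAbove s) :
    ∃ a b, s = Set.Ioo a b := by
  refine ⟨sInf s, sSup s, Set.Subset.antisymm ?_ (IsConnected.Ioo_csInf_csSup_subset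
    ⟨hne, hs.isPreconnected⟩ hb ha)⟩
  rw [← interior_Icc]
  exact interior_maximal (subset_Icc_csInf_csSup hb ha) ho

theorem setIntegral_Ico_sdiff_of_periodic {E : Type*} [NormedAddCommGroup E] [NormedSpace ℝ E]
    {A : Set ℝ} (hA : MeasurableSet A) {T M h : ℝ} (hT : 0 < T) (hh : 0 ≤ h)
    (hAT : ∀ θ, θ + T ∈ A ↔ θ ∈ A)
    (hAM : Set.Ioc (M - T / 2) (M + T / 2) ∩ A = Set.Ioo (M - h) (M + h))
    {G : ℝ → E} (hG : Continuous G) (hGT : Function.Periodic G T) :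
    ∫ θ in Set.Ico 0 T \ A, G θ = (∫ θ in (0 : ℝ)..T, G θ) - ∫ θ in (M - h)..(M + h), G θ := by
  have hper : Function.Periodic (A.indicator G) T := fun θ => by
    by_cases hθ : θ ∈ A
    · rw [Set.indicator_of_mem hθ, Set.indicator_of_mem ((hAT θ).mpr hθ), hGT]
    · rw [Set.indicator_of_notMem hθ, Set.indicator_of_notMem (mt (hAT θ).mp hθ)]
  have hshift : ∫ θ in Set.Ico 0 T ∩ A, G θ = ∫ θ in (M - h)..(M + h), G θ := by
    have := hper.intervalIntegral_add_eq 0 (M - T / 2)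
    rw [zero_add, show M - T / 2 + T = M + T / 2 by ring,
      intervalIntegral.integral_of_le hT.le, intervalIntegral.integral_of_le (by linarith),
      setIntegral_indicator hA, setIntegral_indicator hA, hAM] at this
    rw [intervalIntegral.integral_of_le (by linarith), integral_Ioc_eq_integral_Ioo, ← this]
    exact setIntegral_congr_set (Ico_ae_eq_Ioc.inter (ae_eq_refl A))
  rw [← Set.sdiff_self_inter, setIntegral_sdiff₀
      (measurableSet_Ico.inter hA).nullMeasurableSet
      (hG.integrableOn_Icc.mono_set Set.Ico_subset_Icc_self) Set.inter_subset_left,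
    hshift, intervalIntegral.integral_of_le hT.le, integral_Ico_eq_integral_Ioc]

/-- The Euclidean plane. -/
abbrev Plane : Type := EuclideanSpace ℝ (Fin 2)

section UnitDir

theorem unitDir_eq_repr_exp (θ : ℝ) :
    unitDir θ = Complex.orthonormalBasisOneI.repr (Complex.exp (θ * Complex.I)) := by
  ext i
  fin_cases i <;> simp [unitDir, Complex.exp_mul_I, ← Complex.ofReal_cos, ← Complex.ofReal_sin]

@[simp]
theorem norm_unitDir (θ : ℝ) : ‖unitDir θ‖ = 1 := by
  rw [unitDir_eq_repr_exp, LinearIsometryEquiv.norm_map, Complex.norm_exp_ofReal_mul_I]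

theorem inner_unitDir (α β : ℝ) : ⟪unitDir α, unitDir β⟫ = cos (β - α) := by
  simp [unitDir, PiLp.inner_apply, cos_sub]

theorem unitDir_periodic : Function.Periodic unitDir (2 * π) := fun θ => by
  simp [unitDir]

theorem hasDerivAt_unitDir_sub_pi_div_two (θ : ℝ) :
    HasDerivAt (fun θ => unitDir (θ - π / 2)) (unitDir θ) θ := by
  refine (PiLp.continuousLinearEquiv 2 ℝ fun _ : Fin 2 => ℝ).symm.hasFDerivAt.comp_hasDerivAt θ
    (hasDerivAt_pi.mpr fun i => ?_)
  fin_cases i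
  · simpa [cos_sub_pi_div_two] using hasDerivAt_sin θ
  · simpa [sin_sub_pi_div_two] using (hasDerivAt_cos θ).fun_neg

theorem continuous_unitDir : Continuous unitDir := by
  simp_rw [funext unitDir_eq_repr_exp]
  fun_prop

theorem continuous_add_unitDir (x : Plane) : Continuous fun θ => x + unitDir θ :=
  continuous_const.add continuous_unitDir

theorem exists_eq_norm_smul_unitDir (M : ℝ) (v : Plane) :
    ∃ θ ∈ Set.Ioc (M - π) (M + π), v = ‖v‖ • unitDir θ := by
  set z := Complex.orthonormalBasisOneI.repr.symm v
  obtain ⟨θ, hθ, heq⟩ := unitDir_periodic.exists_mem_Ioc two_pi_pos z.arg (M - π)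
  refine ⟨θ, by rwa [show M - π + 2 * π = M + π by ring] at hθ, ?_⟩
  have hz : ‖v‖ • Complex.exp (z.arg * Complex.I) = z := by
    rw [← Complex.orthonormalBasisOneI.repr.symm.norm_map v, Complex.real_smul,
      Complex.norm_mul_exp_arg_mul_I]
  rw [← heq, unitDir_eq_repr_exp, ← map_smul, hz, LinearIsometryEquiv.apply_symm_apply]

theorem sin_smul_unitDir (α β θ : ℝ) :
    sin (β - α) • unitDir θ = sin (β - θ) • unitDir α + sin (θ - α) • unitDir β := by
  ext i
  fin_cases i <;> simp [unitDir, sin_sub] <;> ring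

theorem integral_unitDir (α β : ℝ) :
    ∫ θ in α..β, unitDir θ = unitDir (β - π / 2) - unitDir (α - π / 2) :=
  intervalIntegral.integral_eq_sub_of_hasDerivAt (fun θ _ => hasDerivAt_unitDir_sub_pi_div_two θ)
    (continuous_unitDir.intervalIntegrable α β)

theorem integral_unitDir_sub_add (M h : ℝ) :
    ∫ θ in (M - h)..(M + h), unitDir θ = (2 * sin h) • unitDir M := by
  rw [integral_unitDir]
  ext i
  fin_cases i
  · simp only [unitDir, cos_sub_pi_div_two, sin_add, sin_sub, WithLp.equiv_symm_apply,
      Fin.zero_eta, PiLp.sub_apply, PiLp.smul_apply, Matrix.cons_val_zero, smul_eq_mul]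
    ring
  · simp only [unitDir, sin_sub_pi_div_two, cos_add, cos_sub, WithLp.equiv_symm_apply, Fin.mk_one,
      PiLp.sub_apply, PiLp.smul_apply, Matrix.cons_val_one, Matrix.cons_val_fin_one, smul_eq_mul]
    ring

theorem integral_unitDir_zero_two_pi : ∫ θ in (0 : ℝ)..2 * π, unitDir θ = 0 := by
  simpa [← two_mul] using integral_unitDir_sub_add π π

theorem integral_inner_unitDir_sq (w : Plane) :
    ∫ θ in (0 : ℝ)..2 * π, ⟪w, unitDir θ⟫ ^ 2 = π * ‖w‖ ^ 2 := by
  obtain ⟨α, -, hw⟩ := exists_eq_norm_smul_unitDir 0 w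
  have (θ : ℝ) : ⟪w, unitDir θ⟫ ^ 2 = ‖w‖ ^ 2 * cos (θ - α) ^ 2 := by
    nth_rewrite 1 [hw]
    rw [real_inner_smul_left, inner_unitDir, mul_pow]
  simp_rw [this]
  rw [intervalIntegral.integral_const_mul, intervalIntegral.integral_comp_sub_right
    (fun θ => cos θ ^ 2), integral_cos_sq, zero_sub, cos_neg, sin_neg, cos_sub, sin_sub]
  simp only [cos_two_pi, one_mul, sin_two_pi, zero_mul, add_zero, zero_sub, mul_neg, sub_self,
    zero_add, sub_neg_eq_add, sub_add_cancel]
  ring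

end UnitDir

section Arc

variable {C : ConvexCone ℝ Plane}

theorem ordConnected_preimage_unitDir (C : ConvexCone ℝ Plane) (φ : ℝ) :
    (Set.Ioo (φ - π / 2) (φ + π / 2) ∩ unitDir ⁻¹' C).OrdConnected := by
  refine ⟨fun α hα β hβ θ hθ => ⟨Set.ordConnected_Ioo.out hα.1 hβ.1 hθ, ?_⟩⟩
  rcases hθ.1.eq_or_lt with rfl | hαθ
  · exact hα.2
  rcases hθ.2.eq_or_lt with rfl | hθβ
  · exact hβ.2
  have hαβ : β - α < π := by linarith [hα.1.1, hβ.1.2]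
  have h := C.add_mem
    (C.smul_mem (sin_pos_of_pos_of_lt_pi (sub_pos.mpr hθβ) (by linarith)) hα.2)
    (C.smul_mem (sin_pos_of_pos_of_lt_pi (sub_pos.mpr hαθ) (by linarith)) hβ.2)
  rw [← sin_smul_unitDir] at h
  exact (C.smul_mem_iff (sin_pos_of_pos_of_lt_pi (by linarith) hαβ)).mp h

theorem exists_unitDir_inner_pos (hC : IsOpen (C : Set Plane)) (h0 : 0 ∉ C) :
    ∃ φ, ∀ v ∈ C, 0 < ⟪unitDir φ, v⟫ := by
  obtain ⟨f, hf⟩ := geometric_hahn_banach_open_point C.convex hC h0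
  set w := -(InnerProductSpace.toDual ℝ Plane).symm f
  have hw (v : Plane) (hv : v ∈ C) : 0 < ⟪w, v⟫ := by
    simpa [w] using hf v hv
  obtain ⟨φ, -, hφ⟩ := exists_eq_norm_smul_unitDir 0 w
  refine ⟨φ, fun v hv => pos_of_mul_pos_right ?_ (norm_nonneg w)⟩
  rw [← real_inner_smul_left, ← hφ]
  exact hw v hv

theorem exists_unitDir_mem_iff_abs_sub_lt (hC : IsOpen (C : Set Plane))
    (hne : (C : Set Plane).Nonempty) (h0 : 0 ∉ C) : ∃ M h, 0 < h ∧ h ≤ π / 2 ∧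
      ∀ θ ∈ Set.Ioc (M - π) (M + π), unitDir θ ∈ C ↔ |θ - M| < h := by
  obtain ⟨φ, hφ⟩ := exists_unitDir_inner_pos hC h0
  have hcos {θ : ℝ} (hθ : unitDir θ ∈ C) : 0 < cos (θ - φ) := inner_unitDir φ θ ▸ hφ _ hθ
  have mem_Ioo {θ : ℝ} (hθ : unitDir θ ∈ C) (h : |θ - φ| ≤ π + π / 2) :
      θ ∈ Set.Ioo (φ - π / 2) (φ + π / 2) := by
    by_contra hnot
    refine (hcos hθ).not_ge ?_
    rw [← cos_abs]
    refine cos_nonpos_of_pi_div_two_le_of_le (le_abs.mpr ?_) h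
    by_contra! hlt
    exact hnot ⟨by linarith, by linarith⟩
  set J := Set.Ioo (φ - π / 2) (φ + π / 2) ∩ unitDir ⁻¹' C
  have hJsub : J ⊆ Set.Ioo (φ - π / 2) (φ + π / 2) := Set.inter_subset_left
  have hJne : J.Nonempty := by
    obtain ⟨v, hv⟩ := hne
    obtain ⟨θ, hθ, hvθ⟩ := exists_eq_norm_smul_unitDir φ v
    have hpos : 0 < ‖v‖ := norm_pos_iff.mpr fun h => h0 (h ▸ hv)
    have hθC : unitDir θ ∈ C := (C.smul_mem_iff hpos).mp (hvθ ▸ hv)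
    exact ⟨θ, mem_Ioo hθC (abs_le.mpr ⟨by linarith [hθ.1, pi_pos], by linarith [hθ.2, pi_pos]⟩),
      hθC⟩
  obtain ⟨α, β, hJ⟩ : ∃ α β, J = Set.Ioo α β := exists_eq_Ioo_of_isOpen_of_ordConnected
    (isOpen_Ioo.inter (hC.preimage continuous_unitDir)) (ordConnected_preimage_unitDir C φ) hJne
    (bddBelow_Ioo.mono hJsub) (bddAbove_Ioo.mono hJsub)
  have hlt : α < β := Set.nonempty_Ioo.mp (hJ ▸ hJne)
  obtain ⟨hα, hβ⟩ := (Set.Ioo_subset_Ioo_iff hlt).mp (hJ ▸ hJsub)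
  refine ⟨(α + β) / 2, (β - α) / 2, by linarith, by linarith, fun θ hθ => ?_⟩
  have hmem : unitDir θ ∈ C ↔ θ ∈ J := ⟨fun h => ⟨mem_Ioo h ?_, h⟩, fun h => h.2⟩
  · rw [hmem, hJ, Set.mem_Ioo, abs_lt]
    constructor <;> rintro ⟨h1, h2⟩ <;> constructor <;> linarith
  · rw [abs_le]
    constructor <;> linarith [hθ.1, hθ.2]

end Arc

/-- The angles at which a unit step from `x` avoids the interior of `K`. -/
def allowedAngles (K : Set Plane) (x : Plane) : Set ℝ :=
  {θ | θ ∈ Set.Ico 0 (2 * π) ∧ segment ℝ x (x + unitDir θ) ∩ interior K = ∅}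

section AllowedAngles

variable {K : Set Plane} {x : Plane}

theorem allowedAngles_of_interior_eq_empty (hK : interior K = ∅) :
    allowedAngles K x = Set.Ico 0 (2 * π) := by
  ext θ
  simp [allowedAngles, hK]

theorem volume_allowedAngles_le (K : Set Plane) (x : Plane) :
    volume (allowedAngles K x) ≤ ENNReal.ofReal (2 * π) := by
  simpa using measure_mono (μ := volume) fun θ (hθ : θ ∈ allowedAngles K x) => hθ.1

theorem volume_real_allowedAngles_le (K : Set Plane) (x : Plane) :
    volume.real (allowedAngles K x) ≤ 2 * π :=
  ENNReal.toReal_le_of_le_ofReal two_pi_pos.le (volume_allowedAngles_le K x)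

theorem allowedAngles_eq_sdiff (hK : Convex ℝ K) (hxK : x ∈ K) (hx : x ∉ interior K) :
    allowedAngles K x = Set.Ico 0 (2 * π) \ {θ | unitDir θ ∈ interiorCone K x} := by
  ext θ
  simp [allowedAngles, segment_inter_interior_eq_empty_iff hK hxK hx]

theorem cos_mul_norm_sub_le_inner (hK : Convex ℝ K) (hne : (interior K).Nonempty)
    {M h : ℝ} (hh : h ≤ π)
    (hM : ∀ θ ∈ Set.Ioc (M - π) (M + π), unitDir θ ∈ interiorCone K x ↔ |θ - M| < h)
    {a : Plane} (ha : a ∈ K) : cos h * ‖a - x‖ ≤ ⟪unitDir M, a - x⟫ := by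
  have hcone {v : Plane} (hv : v ∈ interiorCone K x) : cos h * ‖v‖ ≤ ⟪unitDir M, v⟫ := by
    obtain ⟨θ, hθ, hvθ⟩ := exists_eq_norm_smul_unitDir M v
    rcases (norm_nonneg v).eq_or_lt with h0 | hpos
    · simp [norm_eq_zero.mp h0.symm]
    have hlt := (hM θ hθ).mp (((interiorCone K x).smul_mem_iff hpos).mp (hvθ ▸ hv))
    rw [hvθ, norm_smul, norm_norm, norm_unitDir, mul_one, real_inner_smul_right, inner_unitDir,
      mul_comm, ← cos_abs (θ - M)]
    exact mul_le_mul_of_nonneg_left (cos_le_cos_of_nonneg_of_le_pi (abs_nonneg _)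
      hh hlt.le) hpos.le
  have hclosed : IsClosed {y | cos h * ‖y - x‖ ≤ ⟪unitDir M, y - x⟫} :=
    isClosed_le (by fun_prop) (by fun_prop)
  refine closure_minimal (fun y hy => hcone (sub_mem_interiorCone hy)) hclosed ?_
  rw [hK.closure_interior_eq_closure_of_nonempty_interior hne]
  exact subset_closure ha

theorem exists_bisector (hK : Convex ℝ K) (hne : (interior K).Nonempty) (hxK : x ∈ K)
    (hx : x ∉ interior K) : ∃ M h, 0 ≤ h ∧ h ≤ π / 2 ∧
      (∀ a ∈ K, cos h * ‖a - x‖ ≤ ⟪unitDir M, a - x⟫) ∧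
      ∫ θ in allowedAngles K x, unitDir θ = -((2 * sin h) • unitDir M) ∧
      volume.real (allowedAngles K x) = 2 * π - 2 * h := by
  obtain ⟨y, hy⟩ := hne
  obtain ⟨M, h, hpos, hle, hM⟩ := exists_unitDir_mem_iff_abs_sub_lt (isOpen_interiorCone hK)
    ⟨y - x, sub_mem_interiorCone hy⟩ (zero_notMem_interiorCone hK hx)
  have hmeas : MeasurableSet {θ | unitDir θ ∈ interiorCone K x} :=
    ((isOpen_interiorCone hK).preimage continuous_unitDir).measurableSet
  have hper (θ : ℝ) : θ + 2 * π ∈ {θ | unitDir θ ∈ interiorCone K x} ↔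
      θ ∈ {θ | unitDir θ ∈ interiorCone K x} := by
    simp only [Set.mem_ofPred_eq, unitDir_periodic θ]
  have harc : Set.Ioc (M - 2 * π / 2) (M + 2 * π / 2) ∩ {θ | unitDir θ ∈ interiorCone K x} =
      Set.Ioo (M - h) (M + h) := by
    ext θ
    have hiff : |θ - M| < h ↔ θ ∈ Set.Ioo (M - h) (M + h) := by
      rw [← Real.ball_eq_Ioo, Metric.mem_ball, dist_eq]
    rw [mul_div_cancel_left₀ π two_ne_zero, Set.mem_inter_iff, ← hiff]
    refine ⟨fun hθ => (hM θ hθ.1).mp hθ.2, fun hθ => ?_⟩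
    have hIoc : θ ∈ Set.Ioc (M - π) (M + π) :=
      ⟨by linarith [(abs_lt.mp hθ).1], by linarith [(abs_lt.mp hθ).2]⟩
    exact ⟨hIoc, (hM θ hIoc).mpr hθ⟩
  refine ⟨M, h, hpos.le, hle, fun a ha =>
    cos_mul_norm_sub_le_inner hK ⟨y, hy⟩ (by linarith [pi_pos]) hM ha, ?_, ?_⟩ <;>
    rw [allowedAngles_eq_sdiff hK hxK hx]
  · rw [setIntegral_Ico_sdiff_of_periodic hmeas two_pi_pos hpos.le hper harc continuous_unitDir
      unitDir_periodic, integral_unitDir_zero_two_pi, integral_unitDir_sub_add, zero_sub]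
  · have := setIntegral_Ico_sdiff_of_periodic hmeas two_pi_pos hpos.le hper harc
      (continuous_const (y := (1 : ℝ))) fun _ => rfl
    simpa [two_mul] using this

end AllowedAngles

/-! ### Chord potentials -/

section InnerProduct

variable {V : Type*} [NormedAddCommGroup V] [InnerProductSpace ℝ V]

theorem norm_add_inner_le_norm_add (v u : V) : ‖v‖ + ⟪‖v‖⁻¹ • v, u⟫ ≤ ‖v + u‖ := by
  rcases eq_or_ne v 0 with rfl | hv
  · simp
  have hpos : 0 < ‖v‖ := norm_pos_iff.mpr hv
  refine le_of_mul_le_mul_left ?_ hpos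
  have := real_inner_le_norm v (v + u)
  rw [inner_add_right, real_inner_self_eq_norm_sq] at this
  rwa [real_inner_smul_left, mul_add, mul_inv_cancel_left₀ hpos.ne', ← sq]

theorem inner_le_of_norm_le_norm_sub_add {v w : V} (hv : ‖v‖ ≤ ‖v - w‖ + ‖w‖ / 2)
    (hw : ‖w‖ ≤ ‖v - w‖ + ‖v‖ / 2) : ⟪v, w⟫ ≤ 7 / 8 * (‖v‖ * ‖w‖) := by
  wlog h : ‖w‖ ≤ ‖v‖ generalizing v w
  · rw [real_inner_comm, mul_comm ‖v‖]
    exact this (norm_sub_rev v w ▸ hw) (norm_sub_rev v w ▸ hv) (le_of_not_ge h)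
  have hsq : (‖v‖ - ‖w‖ / 2) ^ 2 ≤ ‖v - w‖ ^ 2 :=
    pow_le_pow_left₀ (by linarith [norm_nonneg w]) (by linarith) 2
  nlinarith [norm_sub_sq_real v w, norm_nonneg w]

open InnerProductGeometry in
theorem one_fourth_le_sin_of_inner_le {v w e : V} {h : ℝ} (hv0 : v ≠ 0) (hw0 : w ≠ 0)
    (he : ‖e‖ = 1) (h0 : 0 ≤ h) (hπ : h ≤ π / 2) (hv : cos h * ‖v‖ ≤ ⟪e, v⟫)
    (hw : cos h * ‖w‖ ≤ ⟪e, w⟫) (hvw : ⟪v, w⟫ ≤ 7 / 8 * (‖v‖ * ‖w‖)) : 1 / 4 ≤ sin h := by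
  have angle_le {y : V} (hy0 : y ≠ 0) (hy : cos h * ‖y‖ ≤ ⟪e, y⟫) : angle e y ≤ h := by
    rw [angle, ← arccos_cos h0 (by linarith [pi_pos])]
    refine arccos_le_arccos ((le_div_iff₀ (by simpa [he] using hy0)).mpr ?_)
    rwa [he, one_mul]
  have hangle : angle v w ≤ 2 * h := by
    have := angle_le_angle_add_angle v e w
    rw [angle_comm v e] at this
    linarith [angle_le hv0 hv, angle_le hw0 hw]
  have hcos : cos (2 * h) ≤ 7 / 8 := by
    refine (cos_le_cos_of_nonneg_of_le_pi (angle_nonneg v w) (by linarith) hangle).trans ?_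
    rw [cos_angle]
    exact (div_le_iff₀ (by positivity)).mpr hvw
  rw [cos_two_mul, cos_sq'] at hcos
  refine le_of_sq_le_sq ?_ (sin_nonneg_of_nonneg_of_le_pi h0 (by linarith))
  linarith

end InnerProduct

theorem exists_abs_le_one_mul_eq_abs (t : ℝ) : ∃ σ : ℝ, |σ| ≤ 1 ∧ σ * t = |t| :=
  ⟨SignType.sign t, by cases SignType.sign t <;> simp, sign_mul_self t⟩

section OrientedPlane

variable {V : Type*} [NormedAddCommGroup V] [InnerProductSpace ℝ V] [Fact (finrank ℝ V = 2)]
  (o : Orientation ℝ V (Fin 2)) {e v w : V}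

local notation "ω" => o.areaForm

theorem mul_norm_le_abs_areaForm_of_inner_le (he : ‖e‖ = 1) (hv : 0 ≤ ⟪e, v⟫)
    (hv' : ⟪e, v⟫ ≤ 1 / 4 * ‖v‖) : 15 / 16 * ‖v‖ ≤ |ω e v| := by
  have hsq := o.inner_sq_add_areaForm_sq e v
  rw [he] at hsq
  refine le_of_sq_le_sq ?_ (abs_nonneg _)
  rw [sq_abs]
  nlinarith

theorem areaForm_mul_areaForm_neg_of_inner_le (he : ‖e‖ = 1) (hv0 : v ≠ 0) (hw0 : w ≠ 0)
    (hv : 0 ≤ ⟪e, v⟫) (hw : 0 ≤ ⟪e, w⟫)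
    (hv' : ⟪e, v⟫ ≤ 1 / 4 * ‖v‖) (hw' : ⟪e, w⟫ ≤ 1 / 4 * ‖w‖)
    (hvw : ⟪v, w⟫ ≤ 7 / 8 * (‖v‖ * ‖w‖)) : ω e v * ω e w < 0 := by
  by_contra! hnonneg
  have hpos : 0 < ‖v‖ * ‖w‖ := by positivity
  have hprod : 15 / 16 * ‖v‖ * (15 / 16 * ‖w‖) ≤ ω e v * ω e w := by
    rw [← abs_of_nonneg hnonneg, abs_mul]
    gcongr
    · exact mul_norm_le_abs_areaForm_of_inner_le o he hv hv'
    · exact mul_norm_le_abs_areaForm_of_inner_le o he hw hw'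
  have := o.inner_mul_inner_add_areaForm_mul_areaForm e v w
  rw [he] at this
  nlinarith [mul_nonneg hv hw]

theorem areaForm_eq_of_norm_eq_one (he : ‖e‖ = 1) (v w : V) :
    ω v w = ⟪e, v⟫ * ω e w - ω e v * ⟪e, w⟫ := by
  simp [o.inner_mul_areaForm_sub e v w, he]

/- If `v` or `w` makes a substantial angle with the line orthogonal to `e`, the inner products
dominate, whatever the sign. Otherwise `v` and `w` point in nearly opposite directions along that
line, and the area term is large. -/
theorem exists_half_le_inner_add_areaForm (he : ‖e‖ = 1) (hv0 : v ≠ 0) (hw0 : w ≠ 0)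
    (hne : v ≠ w) (hv : 0 ≤ ⟪e, v⟫) (hw : 0 ≤ ⟪e, w⟫) (hvw : ⟪v, w⟫ ≤ 7 / 8 * (‖v‖ * ‖w‖)) :
    ∃ σ : ℝ, |σ| ≤ 1 ∧ σ * ω v w = |ω v w| ∧
      1 / 2 ≤ 8 * (⟪e, v⟫ / ‖v‖ + ⟪e, w⟫ / ‖w‖) + σ * ω e (w - v) / ‖w - v‖ := by
  have hv1 : 0 < ‖v‖ := norm_pos_iff.mpr hv0
  have hw1 : 0 < ‖w‖ := norm_pos_iff.mpr hw0
  have hd : 0 < ‖w - v‖ := norm_pos_iff.mpr (sub_ne_zero.mpr hne.symm)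
  have hcv : 0 ≤ ⟪e, v⟫ / ‖v‖ := by positivity
  have hcw : 0 ≤ ⟪e, w⟫ / ‖w‖ := by positivity
  by_cases hc : 1 / 4 ≤ ⟪e, v⟫ / ‖v‖ + ⟪e, w⟫ / ‖w‖
  · obtain ⟨σ, hσ, hσω⟩ := exists_abs_le_one_mul_eq_abs (ω v w)
    have : |σ * ω e (w - v) / ‖w - v‖| ≤ 1 := by
      rw [abs_div, abs_mul, abs_norm, div_le_one hd]
      have := o.abs_areaForm_le e (w - v)
      rw [he, one_mul] at this
      exact (mul_le_of_le_one_left (abs_nonneg _) hσ).trans this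
    exact ⟨σ, hσ, hσω, by linarith [(abs_le.mp this).1]⟩
  push Not at hc
  have hv' : ⟪e, v⟫ ≤ 1 / 4 * ‖v‖ := (div_le_iff₀ hv1).mp (by linarith)
  have hw' : ⟪e, w⟫ ≤ 1 / 4 * ‖w‖ := (div_le_iff₀ hw1).mp (by linarith)
  have hopp := areaForm_mul_areaForm_neg_of_inner_le o he hv0 hw0 hv hw hv' hw' hvw
  obtain ⟨s, hs, hsv, hsw⟩ : ∃ s : ℝ, |s| = 1 ∧ s * ω e v = -|ω e v| ∧ s * ω e w = |ω e w| := by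
    rcases mul_neg_iff.mp hopp with ⟨hv, hw⟩ | ⟨hv, hw⟩
    · exact ⟨-1, by simp, by simp [abs_of_pos hv], by simp [abs_of_neg hw]⟩
    · exact ⟨1, by simp, by simp [abs_of_neg hv], by simp [abs_of_pos hw]⟩
  refine ⟨s, hs.le, ?_, ?_⟩
  · have : 0 ≤ s * ω v w := by
      rw [areaForm_eq_of_norm_eq_one o he]
      nlinarith [mul_nonneg hv (abs_nonneg (ω e w)), mul_nonneg hw (abs_nonneg (ω e v))]
    rw [← abs_of_nonneg this, abs_mul, hs, one_mul]
  · have : 1 / 2 ≤ s * ω e (w - v) / ‖w - v‖ := by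
      rw [le_div_iff₀ hd, map_sub, mul_sub, hsw, hsv]
      linarith [norm_sub_le w v, mul_norm_le_abs_areaForm_of_inner_le o he hv hv',
        mul_norm_le_abs_areaForm_of_inner_le o he hw hw']
    linarith

end OrientedPlane

section ChordPotential

variable {V : Type*} [NormedAddCommGroup V] [InnerProductSpace ℝ V] [Fact (finrank ℝ V = 2)]
  (o : Orientation ℝ V (Fin 2)) {a p x y u : V} {σ : ℝ}

local notation "ω" => o.areaForm

/-- The potential at `y` of the chord from `a` to `p`: a weighted sum of its length, of the
distances from `y` to its endpoints and of the distance from `y` to the line that carries it.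
For `a = p` the last term is `0`. The weight `18` is chosen so that a chord whose potential at `y`
is maximal is long compared with its distance to `y`, see `norm_sub_le_of_chordPotential_le`. -/
noncomputable def chordPotential (a p y : V) : ℝ :=
  18 * ‖a - p‖ + 8 * (‖y - a‖ + ‖y - p‖) + |ω (y - a) (y - p)| / ‖a - p‖

/-- A unit normal to the chord from `a` to `p`. -/
noncomputable def chordNormal (a p : V) : V :=
  ‖a - p‖⁻¹ • o.rightAngleRotation (p - a)

/-- For the right sign `σ`, a subgradient at `x` of the potential of the chord from `a` to `p`. -/
noncomputable def chordGradient (σ : ℝ) (a p x : V) : V :=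
  (8 : ℝ) • (‖x - a‖⁻¹ • (x - a) + ‖x - p‖⁻¹ • (x - p)) + σ • chordNormal o a p

theorem chordPotential_nonneg (a p y : V) : 0 ≤ chordPotential o a p y := by
  unfold chordPotential
  positivity

theorem chordPotential_comm (a p y : V) : chordPotential o a p y = chordPotential o p a y := by
  rw [chordPotential, chordPotential, norm_sub_rev a p, add_comm ‖y - a‖, o.areaForm_swap, abs_neg]

theorem chordPotential_self_right (a y : V) : chordPotential o a y y = 26 * ‖y - a‖ := by
  rw [chordPotential, norm_sub_rev a y, sub_self, norm_zero, map_zero]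
  ring

theorem areaForm_sub_sub (a p y : V) : ω (y - a) (y - p) = ω (y - p) (a - p) := by
  rw [← sub_sub_sub_cancel_right y a p, LinearMap.map_sub₂, o.areaForm_apply_self, zero_sub,
    ← o.areaForm_swap]

theorem continuous_areaForm_sub_sub :
    Continuous fun q : (V × V) × V => ω (q.2 - q.1.1) (q.2 - q.1.2) := by
  simp only [← o.inner_rightAngleRotation_left]
  fun_prop

theorem continuous_chordPotential (a p : V) : Continuous (chordPotential o a p) := by
  have := (continuous_areaForm_sub_sub o).comp (Continuous.prodMk_right (a, p))
  unfold chordPotential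
  fun_prop

theorem measurable_chordPotential [MeasurableSpace V] [BorelSpace V] [SecondCountableTopology V] :
    Measurable fun q : (V × V) × V => chordPotential o q.1.1 q.1.2 q.2 := by
  have := (continuous_areaForm_sub_sub o).measurable
  unfold chordPotential
  fun_prop

theorem chordPotential_le (a p y : V) :
    chordPotential o a p y ≤ 18 * ‖a - p‖ + 8 * (‖y - a‖ + ‖y - p‖) + ‖y - p‖ := by
  unfold chordPotential
  gcongr
  refine div_le_of_le_mul₀ (norm_nonneg _) (norm_nonneg _) ?_
  rw [areaForm_sub_sub]
  exact o.abs_areaForm_le _ _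

theorem areaForm_add_sub_sub (a p x u : V) :
    ω (x + u - a) (x + u - p) = ω (x - a) (x - p) + ω u (a - p) := by
  simp only [add_sub_right_comm, map_add, map_sub, LinearMap.add_apply, LinearMap.sub_apply,
    o.areaForm_apply_self, o.areaForm_swap u x, o.areaForm_swap u a]
  ring

theorem abs_chordPotential_add_sub_le (hu : ‖u‖ = 1) (a p x : V) :
    |chordPotential o a p (x + u) - chordPotential o a p x| ≤ 17 := by
  have dist_le (b : V) : |‖x + u - b‖ - ‖x - b‖| ≤ 1 := by
    simpa [add_sub_right_comm, hu] using abs_norm_sub_norm_le (x - b + u) (x - b)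
  have area_le : |(|ω (x + u - a) (x + u - p)| - |ω (x - a) (x - p)|) / ‖a - p‖| ≤ 1 := by
    rw [abs_div, abs_norm]
    refine div_le_one_of_le₀ ((abs_abs_sub_abs_le_abs_sub _ _).trans ?_) (norm_nonneg _)
    rw [areaForm_add_sub_sub, add_sub_cancel_left]
    simpa [hu] using o.abs_areaForm_le u (a - p)
  have ha := abs_le.mp (dist_le a)
  have hp := abs_le.mp (dist_le p)
  have harea := abs_le.mp area_le
  rw [sub_div] at harea
  rw [chordPotential, chordPotential, abs_le]
  constructor <;> linarith [ha.1, ha.2, hp.1, hp.2, harea.1, harea.2]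

theorem norm_chordNormal (hap : a ≠ p) : ‖chordNormal o a p‖ = 1 := by
  rw [chordNormal, norm_smul, LinearIsometryEquiv.norm_map, norm_inv, norm_norm, norm_sub_rev p a,
    inv_mul_cancel₀ (norm_ne_zero_iff.mpr (sub_ne_zero.mpr hap))]

theorem inner_chordNormal (a p u : V) : ⟪chordNormal o a p, u⟫ = ω u (a - p) / ‖a - p‖ := by
  rw [chordNormal, real_inner_smul_left, o.inner_rightAngleRotation_left, o.areaForm_swap,
    ← map_neg, neg_sub, inv_mul_eq_div]

theorem inner_chordGradient (σ : ℝ) (a p x u : V) :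
    ⟪chordGradient o σ a p x, u⟫ =
      8 * (⟪x - a, u⟫ / ‖x - a‖ + ⟪x - p, u⟫ / ‖x - p‖) + σ * ⟪chordNormal o a p, u⟫ := by
  simp only [chordGradient, inner_add_left, real_inner_smul_left, inv_mul_eq_div]

theorem inner_chordGradient_le (hσ : |σ| ≤ 1) (h : σ * ω (x - a) (x - p) = |ω (x - a) (x - p)|)
    (u : V) : ⟪chordGradient o σ a p x, u⟫ ≤
      chordPotential o a p (x + u) - chordPotential o a p x := by
  have ha := norm_add_inner_le_norm_add (x - a) u
  have hp := norm_add_inner_le_norm_add (x - p) u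
  have harea : |ω (x - a) (x - p)| / ‖a - p‖ + σ * (ω u (a - p) / ‖a - p‖) ≤
      |ω (x + u - a) (x + u - p)| / ‖a - p‖ := by
    rw [← mul_div_assoc, ← add_div, ← h, ← mul_add, ← areaForm_add_sub_sub]
    gcongr
    refine (le_abs_self _).trans ?_
    rw [abs_mul]
    exact mul_le_of_le_one_left (abs_nonneg _) hσ
  rw [real_inner_smul_left, ← add_sub_right_comm, inv_mul_eq_div] at ha hp
  rw [inner_chordGradient, inner_chordNormal, chordPotential, chordPotential]
  linarith

theorem inner_add_sq_le_chordPotential_sub (hap : a ≠ p) (hflat : ω (x - a) (x - p) = 0)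
    (hu : ‖u‖ = 1) : ⟪chordGradient o 0 a p x, u⟫ + ⟪chordNormal o a p, u⟫ ^ 2 ≤
      chordPotential o a p (x + u) - chordPotential o a p x := by
  obtain ⟨σ, hσ, hσn⟩ := exists_abs_le_one_mul_eq_abs ⟪chordNormal o a p, u⟫
  have hle : |⟪chordNormal o a p, u⟫| ≤ 1 := by
    simpa [norm_chordNormal o hap, hu] using abs_real_inner_le_norm (chordNormal o a p) u
  have hsq : ⟪chordNormal o a p, u⟫ ^ 2 ≤ σ * ⟪chordNormal o a p, u⟫ := by
    rw [hσn, ← sq_abs, sq]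
    exact mul_le_of_le_one_left (abs_nonneg _) hle
  refine le_trans ?_ (inner_chordGradient_le o hσ (by rw [hflat, mul_zero, abs_zero]) u)
  rw [inner_chordGradient, inner_chordGradient]
  linarith

theorem eight_add_inner_le_chordPotential_sub (hu : ‖u‖ = 1) (x p : V) :
    8 + ⟪(8 / ‖x - p‖) • (x - p), u⟫ ≤
      chordPotential o x p (x + u) - chordPotential o x p x := by
  have hp := norm_add_inner_le_norm_add (x - p) u
  have harea : 0 ≤ |ω (x + u - x) (x + u - p)| / ‖x - p‖ := by positivity
  rw [← add_sub_right_comm] at hp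
  rw [chordPotential, chordPotential, div_eq_mul_inv, mul_smul, real_inner_smul_left, sub_self,
    map_zero, LinearMap.zero_apply, add_sub_cancel_left, hu]
  rw [add_sub_cancel_left] at harea
  simp only [norm_zero, abs_zero, zero_div]
  linarith

theorem norm_sub_le_of_chordPotential_le (h : chordPotential o a x x ≤ chordPotential o a p x) :
    ‖x - a‖ ≤ ‖a - p‖ + ‖x - p‖ / 2 := by
  rw [chordPotential_self_right] at h
  linarith [chordPotential_le o a p x]

end ChordPotential

/-! ### Drift of the potential -/

theorem areaForm_sub_sub_eq_zero_of_interior_eq_empty {V : Type*} [NormedAddCommGroup V]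
    [InnerProductSpace ℝ V] [Fact (finrank ℝ V = 2)] (o : Orientation ℝ V (Fin 2)) {K : Set V}
    (hK : Convex ℝ K) (hint : interior K = ∅) {x a p : V} (hx : x ∈ K) (ha : a ∈ K) (hp : p ∈ K) :
    o.areaForm (x - a) (x - p) = 0 := by
  have : FiniteDimensional ℝ V := .of_fact_finrank_eq_two
  have haff : affineSpan ℝ K ≠ ⊤ := by
    rw [Ne, ← hK.interior_nonempty_iff_affineSpan_eq_top, hint]
    exact Set.not_nonempty_empty
  have hspan : (vectorSpan ℝ K)ᗮ ≠ ⊥ := by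
    rwa [Ne, Submodule.orthogonal_eq_bot_iff, ← direction_affineSpan,
      AffineSubspace.direction_eq_top_iff_of_nonempty ⟨x, subset_affineSpan ℝ K hx⟩]
  obtain ⟨q, hq, hq0⟩ := Submodule.exists_mem_ne_zero_of_ne_bot hspan
  have inner_eq {b : V} (hb : b ∈ K) : ⟪q, x - b⟫ = 0 :=
    Submodule.inner_left_of_mem_orthogonal (vsub_mem_vectorSpan ℝ hx hb) hq
  have := o.inner_mul_areaForm_sub q (x - a) (x - p)
  rw [inner_eq ha, inner_eq hp, zero_mul, mul_zero, sub_zero] at this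
  exact (mul_eq_zero.mp this.symm).resolve_left (by positivity)

/-- The standard orientation of the plane. -/
noncomputable def planeOrientation : Orientation ℝ Plane (Fin 2) :=
  (EuclideanSpace.basisFun (Fin 2) ℝ).toBasis.orientation

section Drift

variable {K : Set Plane} {x a p : Plane}

theorem integrableOn_allowedAngles {E : Type*} [NormedAddCommGroup E] {G : ℝ → E}
    (hG : Continuous G) (K : Set Plane) (x : Plane) : IntegrableOn G (allowedAngles K x) :=
  hG.integrableOn_Icc.mono_set fun _ hθ => Set.Ico_subset_Icc_self hθ.1

theorem integral_unitDir_allowedAngles_of_interior_eq_empty (hint : interior K = ∅) :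
    ∫ θ in allowedAngles K x, unitDir θ = 0 := by
  rw [allowedAngles_of_interior_eq_empty hint, integral_Ico_eq_integral_Ioc,
    ← intervalIntegral.integral_of_le two_pi_pos.le, integral_unitDir_zero_two_pi]

theorem inner_integral_unitDir_allowedAngles_nonneg (hK : Convex ℝ K) (hxK : x ∈ K)
    (hx : x ∉ interior K) (hp : p ∈ K) :
    0 ≤ ⟪x - p, ∫ θ in allowedAngles K x, unitDir θ⟫ := by
  rcases (interior K).eq_empty_or_nonempty with hint | hne
  · simp [integral_unitDir_allowedAngles_of_interior_eq_empty hint]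
  obtain ⟨M, h, h0, hπ, hcone, hint, -⟩ := exists_bisector hK hne hxK hx
  have hsin : 0 ≤ sin h := sin_nonneg_of_nonneg_of_le_pi h0 (by linarith [pi_pos])
  have hcos : 0 ≤ cos h := cos_nonneg_of_neg_pi_div_two_le_of_le (by linarith [pi_pos]) hπ
  have hinner : 0 ≤ ⟪unitDir M, p - x⟫ := (by positivity : 0 ≤ cos h * ‖p - x‖).trans (hcone p hp)
  rw [hint, ← neg_sub p x, inner_neg_neg, real_inner_smul_right, real_inner_comm]
  positivity

theorem pi_le_volume_real_allowedAngles (hK : Convex ℝ K) (hxK : x ∈ K) (hx : x ∉ interior K) :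
    π ≤ volume.real (allowedAngles K x) := by
  rcases (interior K).eq_empty_or_nonempty with hint | hne
  · simp only [allowedAngles_of_interior_eq_empty hint, volume_real_Ico, sub_zero]
    exact (by linarith [pi_pos] : π ≤ 2 * π).trans (le_max_left _ _)
  obtain ⟨M, h, -, hπ, -, -, hvol⟩ := exists_bisector hK hne hxK hx
  linarith

theorem le_setIntegral_allowedAngles {f : ℝ → ℝ} {c : ℝ} {g : Plane} (hf : Continuous f)
    (h : ∀ θ, c + ⟪g, unitDir θ⟫ ≤ f θ) (K : Set Plane) (x : Plane) :
    c * volume.real (allowedAngles K x) + ⟪g, ∫ θ in allowedAngles K x, unitDir θ⟫ ≤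
      ∫ θ in allowedAngles K x, f θ := by
  have hunit := integrableOn_allowedAngles continuous_unitDir K x
  have hconst := integrableOn_allowedAngles (continuous_const (y := c)) K x
  rw [mul_comm, ← smul_eq_mul, ← setIntegral_const, ← integral_inner hunit,
    ← integral_add hconst (hunit.const_inner g)]
  exact setIntegral_mono (hconst.add (hunit.const_inner g)) (integrableOn_allowedAngles hf K x) h

theorem continuous_chordPotential_add_unitDir_sub (a p x : Plane) : Continuous fun θ =>
    chordPotential planeOrientation a p (x + unitDir θ) -
      chordPotential planeOrientation a p x :=
  ((continuous_chordPotential _ a p).comp (continuous_add_unitDir x)).sub continuous_const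

theorem drift_of_eq_left (hK : Convex ℝ K) (hxK : x ∈ K) (hx : x ∉ interior K) (hp : p ∈ K) :
    1 / 4 ≤ ∫ θ in allowedAngles K x, (chordPotential planeOrientation x p (x + unitDir θ) -
      chordPotential planeOrientation x p x) := by
  refine le_trans ?_ (le_setIntegral_allowedAngles
    (continuous_chordPotential_add_unitDir_sub x p x)
    (fun θ => eight_add_inner_le_chordPotential_sub _ (norm_unitDir θ) x p) K x)
  have hinner := inner_integral_unitDir_allowedAngles_nonneg hK hxK hx hp
  have hvol := pi_le_volume_real_allowedAngles hK hxK hx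
  rw [real_inner_smul_left]
  have : 0 ≤ 8 / ‖x - p‖ * ⟪x - p, ∫ θ in allowedAngles K x, unitDir θ⟫ := by positivity
  linarith [pi_gt_three]

theorem drift_of_interior_eq_empty (hK : Convex ℝ K) (hint : interior K = ∅) (hxK : x ∈ K)
    (ha : a ∈ K) (hp : p ∈ K) (hap : a ≠ p) :
    1 / 4 ≤ ∫ θ in allowedAngles K x, (chordPotential planeOrientation a p (x + unitDir θ) -
      chordPotential planeOrientation a p x) := by
  have hflat := areaForm_sub_sub_eq_zero_of_interior_eq_empty planeOrientation hK hint hxK ha hp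
  have hinc := continuous_chordPotential_add_unitDir_sub a p x
  have hcont : Continuous fun θ => ⟪chordNormal planeOrientation a p, unitDir θ⟫ ^ 2 := by
    have := continuous_unitDir
    fun_prop
  have hsq : ∫ θ in allowedAngles K x, ⟪chordNormal planeOrientation a p, unitDir θ⟫ ^ 2 = π := by
    rw [allowedAngles_of_interior_eq_empty hint, integral_Ico_eq_integral_Ioc,
      ← intervalIntegral.integral_of_le two_pi_pos.le, integral_inner_unitDir_sq,
      norm_chordNormal _ hap]
    ring
  have bound := le_setIntegral_allowedAngles (c := 0) (hinc.sub hcont) (fun θ => by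
    rw [zero_add, Pi.sub_apply, le_sub_iff_add_le]
    exact inner_add_sq_le_chordPotential_sub _ hap hflat (norm_unitDir θ)) K x
  simp only [Pi.sub_apply] at bound
  rw [integral_unitDir_allowedAngles_of_interior_eq_empty hint, inner_zero_right, integral_sub
    (integrableOn_allowedAngles hinc K x) (integrableOn_allowedAngles hcont K x), hsq] at bound
  linarith [pi_gt_three]

theorem drift_of_interior_nonempty (hK : Convex ℝ K) (hne : (interior K).Nonempty) (hxK : x ∈ K)
    (hx : x ∉ interior K) (ha : a ∈ K) (hp : p ∈ K) (hxa : x ≠ a) (hxp : x ≠ p) (hap : a ≠ p)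
    (hl : ‖x - a‖ ≤ ‖a - p‖ + ‖x - p‖ / 2) (hm : ‖x - p‖ ≤ ‖a - p‖ + ‖x - a‖ / 2) :
    1 / 4 ≤ ∫ θ in allowedAngles K x, (chordPotential planeOrientation a p (x + unitDir θ) -
      chordPotential planeOrientation a p x) := by
  obtain ⟨M, h, h0, hπ, hcone, hint, -⟩ := exists_bisector hK hne hxK hx
  have hcos : 0 ≤ cos h := cos_nonneg_of_neg_pi_div_two_le_of_le (by linarith [pi_pos]) hπ
  have hva : a - x ≠ 0 := sub_ne_zero.mpr hxa.symm
  have hvp : p - x ≠ 0 := sub_ne_zero.mpr hxp.symm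
  have hangle : ⟪a - x, p - x⟫ ≤ 7 / 8 * (‖a - x‖ * ‖p - x‖) := by
    rw [norm_sub_rev x a, norm_sub_rev x p] at hl hm
    exact inner_le_of_norm_le_norm_sub_add (by simpa using hl) (by simpa using hm)
  have hsin : 1 / 4 ≤ sin h := one_fourth_le_sin_of_inner_le hva hvp (norm_unitDir M) h0 hπ
    (hcone a ha) (hcone p hp) hangle
  obtain ⟨σ, hσ, hσω, hgrad⟩ := exists_half_le_inner_add_areaForm planeOrientation
    (norm_unitDir M) hva hvp (by simpa using hap)
    ((by positivity : 0 ≤ cos h * ‖a - x‖).trans (hcone a ha))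
    ((by positivity : 0 ≤ cos h * ‖p - x‖).trans (hcone p hp)) hangle
  set g := chordGradient planeOrientation σ a p x
  have hg : ⟪g, unitDir M⟫ ≤ -(1 / 2) := by
    have inner_sub (b : Plane) : ⟪x - b, unitDir M⟫ = -⟪unitDir M, b - x⟫ := by
      rw [real_inner_comm, ← neg_sub b x, inner_neg_right]
    rw [inner_chordGradient, inner_chordNormal, inner_sub, inner_sub, norm_sub_rev x a,
      norm_sub_rev x p]
    rw [sub_sub_sub_cancel_right, ← neg_sub a p, map_neg, norm_neg] at hgrad
    linear_combination hgrad
  refine le_trans ?_ (le_setIntegral_allowedAngles (c := 0) (g := g)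
    (continuous_chordPotential_add_unitDir_sub a p x) (fun θ => ?_) K x)
  · rw [hint, inner_neg_right, real_inner_smul_right]
    nlinarith
  · rw [zero_add]
    refine inner_chordGradient_le _ hσ ?_ (unitDir θ)
    rwa [← neg_sub a x, ← neg_sub p x, LinearMap.map_neg₂, map_neg, neg_neg]

theorem drift_of_norm_sub_le (hK : Convex ℝ K) (hxK : x ∈ K) (hx : x ∉ interior K) (ha : a ∈ K)
    (hp : p ∈ K) (hl : ‖x - a‖ ≤ ‖a - p‖ + ‖x - p‖ / 2)
    (hm : ‖x - p‖ ≤ ‖a - p‖ + ‖x - a‖ / 2) :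
    1 / 4 ≤ ∫ θ in allowedAngles K x, (chordPotential planeOrientation a p (x + unitDir θ) -
      chordPotential planeOrientation a p x) := by
  rcases eq_or_ne x a with rfl | hxa
  · exact drift_of_eq_left hK hxK hx hp
  rcases eq_or_ne x p with rfl | hxp
  · simp only [chordPotential_comm _ a x]
    exact drift_of_eq_left hK hxK hx ha
  have hap : a ≠ p := by
    rintro rfl
    rw [sub_self, norm_zero] at hl
    exact hxa (sub_eq_zero.mp (norm_le_zero_iff.mp (by linarith)))
  rcases (interior K).eq_empty_or_nonempty with hint | hne
  · exact drift_of_interior_eq_empty hK hint hxK ha hp hap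
  · exact drift_of_interior_nonempty hK hne hxK hx ha hp hxa hxp hap hl hm

end Drift

section MaxChordPotential

variable {V : Type*} [NormedAddCommGroup V] [InnerProductSpace ℝ V] [Fact (finrank ℝ V = 2)]
  (o : Orientation ℝ V (Fin 2)) {ι κ : Type*} [Fintype ι] [Nonempty ι] [Fintype κ] [Nonempty κ]

/-- The largest potential at `y` of a chord between points of the family `h`. -/
noncomputable def maxChordPotential (h : ι → V) (y : V) : ℝ :=
  Finset.univ.sup' Finset.univ_nonempty fun q : ι × ι => chordPotential o (h q.1) (h q.2) y

theorem chordPotential_le_maxChordPotential (h : ι → V) (y : V) (i j : ι) :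
    chordPotential o (h i) (h j) y ≤ maxChordPotential o h y :=
  Finset.le_sup' (fun q : ι × ι => chordPotential o (h q.1) (h q.2) y) (Finset.mem_univ (i, j))

theorem exists_maxChordPotential_eq (h : ι → V) (y : V) :
    ∃ i j, maxChordPotential o h y = chordPotential o (h i) (h j) y := by
  obtain ⟨q, -, hq⟩ := Finset.exists_mem_eq_sup' Finset.univ_nonempty
    fun q : ι × ι => chordPotential o (h q.1) (h q.2) y
  exact ⟨q.1, q.2, hq⟩

theorem maxChordPotential_nonneg (h : ι → V) (y : V) : 0 ≤ maxChordPotential o h y := by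
  obtain ⟨i, j, hij⟩ := exists_maxChordPotential_eq o h y
  exact hij ▸ chordPotential_nonneg o _ _ _

theorem continuous_maxChordPotential (h : ι → V) : Continuous (maxChordPotential o h) :=
  Continuous.finset_sup'_apply _ fun _ _ => continuous_chordPotential o _ _

theorem measurable_maxChordPotential [MeasurableSpace V] [BorelSpace V]
    [SecondCountableTopology V] :
    Measurable fun q : (ι → V) × V => maxChordPotential o q.1 q.2 := by
  have hsup : Measurable (Finset.univ.sup' Finset.univ_nonempty
      fun (r : ι × ι) (q : (ι → V) × V) => chordPotential o (q.1 r.1) (q.1 r.2) q.2) :=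
    Finset.measurable_sup' _ fun r _ => (measurable_chordPotential o).comp
      (f := fun q : (ι → V) × V => ((q.1 r.1, q.1 r.2), q.2)) (by fun_prop)
  convert hsup using 1
  ext q
  rw [Finset.sup'_apply, maxChordPotential]

theorem maxChordPotential_le_of_range_subset {h : ι → V} {k : κ → V}
    (hsub : Set.range h ⊆ Set.range k) (y : V) :
    maxChordPotential o h y ≤ maxChordPotential o k y := by
  obtain ⟨i, j, hij⟩ := exists_maxChordPotential_eq o h y
  obtain ⟨i', hi⟩ := hsub (Set.mem_range_self i)
  obtain ⟨j', hj⟩ := hsub (Set.mem_range_self j)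
  rw [hij, ← hi, ← hj]
  exact chordPotential_le_maxChordPotential o k y i' j'

theorem maxChordPotential_le_of_norm_le {h : ι → V} {y : V} {R : ℝ} (hR : ∀ i, ‖h i‖ ≤ R)
    (hy : ‖y‖ ≤ R) : maxChordPotential o h y ≤ 70 * R := by
  obtain ⟨i, j, hij⟩ := exists_maxChordPotential_eq o h y
  rw [hij]
  linarith [chordPotential_le o (h i) (h j) y, norm_sub_le (h i) (h j), norm_sub_le y (h i),
    norm_sub_le y (h j), hR i, hR j]

/-- The weight of a family `h` seen from `y`, the exponential supermartingale of the argument.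
The rate `1 / 20000` makes the second-order term `2π (17 / 20000) ^ 2` smaller than the first-order
gain `(1 / 4) / 20000`, where `17` and `1 / 4` bound the increment and the drift from
`abs_chordPotential_add_sub_le` and `drift_of_norm_sub_le`. -/
noncomputable def chordWeight (h : ι → V) (y : V) : ℝ :=
  exp (-(1 / 20000) * maxChordPotential o h y)

theorem chordWeight_nonneg (h : ι → V) (y : V) : 0 ≤ chordWeight o h y :=
  exp_nonneg _

theorem chordWeight_le_one (h : ι → V) (y : V) : chordWeight o h y ≤ 1 :=
  exp_le_one_iff.mpr (by linarith [maxChordPotential_nonneg o h y])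

theorem continuous_chordWeight (h : ι → V) : Continuous (chordWeight o h) :=
  ((continuous_maxChordPotential o h).const_mul _).rexp

theorem measurable_chordWeight [MeasurableSpace V] [BorelSpace V] [SecondCountableTopology V] :
    Measurable fun q : (ι → V) × V => chordWeight o q.1 q.2 :=
  ((measurable_maxChordPotential o).const_mul _).exp

theorem chordWeight_le_of_range_subset {h : ι → V} {k : κ → V}
    (hsub : Set.range h ⊆ Set.range k) (y : V) : chordWeight o k y ≤ chordWeight o h y :=
  exp_le_exp.mpr (by linarith [maxChordPotential_le_of_range_subset o hsub y])

end MaxChordPotential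

section Contraction

variable {K : Set Plane} {x a p : Plane}

theorem allowedAngles_of_mem_interior (hx : x ∈ interior K) : allowedAngles K x = ∅ :=
  Set.eq_empty_of_forall_notMem fun _ hθ => hθ.2.le ⟨left_mem_segment ℝ _ _, hx⟩

theorem isFiniteMeasure_restrict_allowedAngles (K : Set Plane) (x : Plane) :
    IsFiniteMeasure (volume.restrict (allowedAngles K x)) :=
  isFiniteMeasure_restrict.mpr
    ((volume_allowedAngles_le K x).trans_lt ENNReal.ofReal_lt_top).ne

theorem setIntegral_exp_chordPotential_le (hK : Convex ℝ K) (hxK : x ∈ K) (hx : x ∉ interior K)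
    (ha : a ∈ K) (hp : p ∈ K) (hl : ‖x - a‖ ≤ ‖a - p‖ + ‖x - p‖ / 2)
    (hm : ‖x - p‖ ≤ ‖a - p‖ + ‖x - a‖ / 2) :
    ∫ θ in allowedAngles K x,
        exp (-(1 / 20000) * chordPotential planeOrientation a p (x + unitDir θ)) ≤
      volume.real (allowedAngles K x) *
        ((1 - 1 / 10 ^ 6) * exp (-(1 / 20000) * chordPotential planeOrientation a p x)) := by
  have := isFiniteMeasure_restrict_allowedAngles K x
  set f : ℝ → ℝ := fun θ => chordPotential planeOrientation a p (x + unitDir θ) -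
    chordPotential planeOrientation a p x
  have hdrift : 1 / 4 ≤ ∫ θ in allowedAngles K x, f θ :=
    drift_of_norm_sub_le hK hxK hx ha hp hl hm
  have hexp := integral_exp_neg_mul_le (l := 1 / 20000) (B := 17) (integrableOn_allowedAngles
    (continuous_chordPotential_add_unitDir_sub a p x) K x)
    (fun θ => abs_chordPotential_add_sub_le _ (norm_unitDir θ) a p x) (by norm_num) (by norm_num)
  rw [measureReal_restrict_apply_univ] at hexp
  have hsplit (θ : ℝ) : exp (-(1 / 20000) * chordPotential planeOrientation a p (x + unitDir θ)) =
      exp (-(1 / 20000) * f θ) * exp (-(1 / 20000) * chordPotential planeOrientation a p x) := by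
    rw [← exp_add, ← mul_add, sub_add_cancel]
  simp only [hsplit, integral_mul_const]
  rw [← mul_assoc]
  gcongr
  linarith [volume_real_allowedAngles_le K x, pi_lt_d2]

theorem setIntegral_chordWeight_le {ι : Type*} [Fintype ι] [Nonempty ι] (h : ι → Plane) (k : ι) :
    ∫ θ in allowedAngles (convexHull ℝ (Set.range h)) (h k),
        chordWeight planeOrientation h (h k + unitDir θ) ≤
      volume.real (allowedAngles (convexHull ℝ (Set.range h)) (h k)) *
        ((1 - 1 / 10 ^ 6) * chordWeight planeOrientation h (h k)) := by
  by_cases hint : h k ∈ interior (convexHull ℝ (Set.range h))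
  · simp [allowedAngles_of_mem_interior hint]
  have hmem (i : ι) : h i ∈ convexHull ℝ (Set.range h) :=
    subset_convexHull ℝ _ (Set.mem_range_self i)
  obtain ⟨i, j, hij⟩ := exists_maxChordPotential_eq planeOrientation h (h k)
  have hmax := chordPotential_le_maxChordPotential planeOrientation h
  have hl : ‖h k - h i‖ ≤ ‖h i - h j‖ + ‖h k - h j‖ / 2 :=
    norm_sub_le_of_chordPotential_le _ (hij ▸ hmax (h k) i k)
  have hm : ‖h k - h j‖ ≤ ‖h i - h j‖ + ‖h k - h i‖ / 2 := by
    rw [norm_sub_rev (h i)]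
    refine norm_sub_le_of_chordPotential_le planeOrientation ?_
    rw [chordPotential_comm _ (h j) (h i), ← hij]
    exact hmax (h k) j k
  have hcont := continuous_add_unitDir (h k)
  have hle (θ : ℝ) : chordWeight planeOrientation h (h k + unitDir θ) ≤
      exp (-(1 / 20000) * chordPotential planeOrientation (h i) (h j) (h k + unitDir θ)) :=
    exp_le_exp.mpr (by linarith [hmax (h k + unitDir θ) i j])
  rw [chordWeight, hij]
  exact (setIntegral_mono
    (integrableOn_allowedAngles ((continuous_chordWeight _ h).comp hcont) _ _)
    (integrableOn_allowedAngles
      (((continuous_chordPotential _ (h i) (h j)).comp hcont).const_mul _).rexp _ _) hle).trans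
    (setIntegral_exp_chordPotential_le (convex_convexHull ℝ _) (hmem k) hint (hmem i) (hmem j)
      hl hm)

end Contraction

/-! ### The rancher process -/

section RancherProcess

variable {Ω : Type*} {m0 : MeasurableSpace Ω} {μ : Measure Ω} {ℱ : Filtration ℕ m0}
  {x : ℕ → Ω → Plane}

/-- `x` is a rancher process in the filtration `ℱ`, with an arbitrary `ℱ 0`-measurable starting
point: it is adapted and `rancherStep x n` is the conditional law of `x (n + 1)` given `ℱ n`. -/
structure IsRancherProcess (ℱ : Filtration ℕ m0) (x : ℕ → Ω → Plane) (μ : Measure Ω) : Prop where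
  adapted : Adapted ℱ x
  condExp_next : ∀ n s, MeasurableSet s →
    μ⟦x (n + 1) ⁻¹' s | ℱ n⟧ =ᵐ[μ] fun ω => (rancherStep x n ω).real s

/-- The first `n + 1` positions of the process. -/
def history (x : ℕ → Ω → Plane) (n : ℕ) (ω : Ω) (i : Fin (n + 1)) : Plane := x i ω

/-- The value at time `n` of the exponential supermartingale: the weight of the positions visited
so far, seen from the current one. -/
noncomputable def historyWeight (x : ℕ → Ω → Plane) (n : ℕ) (ω : Ω) : ℝ :=
  chordWeight planeOrientation (history x n ω) (x n ω)

theorem range_history_subset_succ (x : ℕ → Ω → Plane) (n : ℕ) (ω : Ω) :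
    Set.range (history x n ω) ⊆ Set.range (history x (n + 1) ω) :=
  Set.range_subset_iff.mpr fun i => ⟨i.castSucc, rfl⟩

theorem integral_rancherStep (x : ℕ → Ω → Plane) (n : ℕ) (ω : Ω) {f : Plane → ℝ}
    (hf : Continuous f) : ∫ y, f y ∂rancherStep x n ω =
      (volume.real (rancherAngles x n ω))⁻¹ *
        ∫ θ in rancherAngles x n ω, f (x n ω + unitDir θ) := by
  rw [rancherStep, integral_smul_measure,
    integral_map (continuous_add_unitDir _).aemeasurable hf.aestronglyMeasurable,
    smul_eq_mul, ENNReal.toReal_inv, measureReal_def]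

instance isFiniteMeasure_rancherStep (x : ℕ → Ω → Plane) (n : ℕ) (ω : Ω) :
    IsFiniteMeasure (rancherStep x n ω) where
  measure_univ_lt_top := by
    rw [rancherStep, Measure.smul_apply,
      Measure.map_apply (continuous_add_unitDir _).measurable .univ,
      Set.preimage_univ, Measure.restrict_apply_univ, smul_eq_mul]
    exact (ENNReal.inv_mul_le_one _).trans_lt ENNReal.one_lt_top

theorem ae_rancherStep_dist_eq_one (x : ℕ → Ω → Plane) (n : ℕ) (ω : Ω) :
    ∀ᵐ y ∂rancherStep x n ω, dist (x n ω) y = 1 := by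
  refine Measure.ae_smul_measure ?_ _
  rw [ae_map_iff (continuous_add_unitDir _).aemeasurable
    (measurableSet_eq_fun (by fun_prop) measurable_const)]
  exact ae_of_all _ fun θ => by rw [dist_self_add_right, norm_unitDir]

theorem integral_chordWeight_rancherStep_le (x : ℕ → Ω → Plane) (n : ℕ) (ω : Ω) :
    ∫ y, chordWeight planeOrientation (history x n ω) y ∂rancherStep x n ω ≤
      (1 - 1 / 10 ^ 6) * historyWeight x n ω := by
  have hweight : 0 ≤ (1 - 1 / 10 ^ 6) * historyWeight x n ω :=
    mul_nonneg (by norm_num) (chordWeight_nonneg _ _ _)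
  have hstep : ∫ θ in rancherAngles x n ω, chordWeight planeOrientation (history x n ω)
      (x n ω + unitDir θ) ≤ volume.real (rancherAngles x n ω) *
        ((1 - 1 / 10 ^ 6) * historyWeight x n ω) :=
    setIntegral_chordWeight_le (history x n ω) (Fin.last n)
  rw [integral_rancherStep x n ω (continuous_chordWeight _ _)]
  refine (mul_le_mul_of_nonneg_left hstep (inv_nonneg.mpr measureReal_nonneg)).trans ?_
  rw [← mul_assoc]
  exact mul_le_of_le_one_left hweight inv_mul_le_one

namespace IsRancherProcess

theorem measurable (h : IsRancherProcess ℱ x μ) (n : ℕ) : Measurable (x n) :=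
  (h.adapted n).mono (ℱ.le n) le_rfl

theorem measurable_history (h : IsRancherProcess ℱ x μ) (n : ℕ) :
    Measurable[ℱ n] (history x n) :=
  @measurable_pi_lambda _ _ _ (ℱ n) _ _ fun i =>
    (h.adapted i).mono (ℱ.mono (Nat.le_of_lt_succ i.isLt)) le_rfl

variable [IsFiniteMeasure μ]

theorem integrable_chordWeight (h : IsRancherProcess ℱ x μ) (n k : ℕ) :
    Integrable (fun ω => chordWeight planeOrientation (history x n ω) (x k ω)) μ := by
  have hpair := ((h.measurable_history n).mono (ℱ.le n) le_rfl).prodMk (h.measurable k)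
  refine .of_bound ((measurable_chordWeight _).comp hpair).aestronglyMeasurable 1
    (ae_of_all _ fun ω => ?_)
  rw [norm_of_nonneg (chordWeight_nonneg _ _ _)]
  exact chordWeight_le_one _ _ _

theorem integral_historyWeight_succ_le (h : IsRancherProcess ℱ x μ) (n : ℕ) :
    ∫ ω, historyWeight x (n + 1) ω ∂μ ≤ (1 - 1 / 10 ^ 6) * ∫ ω, historyWeight x n ω ∂μ := by
  have hcond := condExp_prod_ae_eq_integral (ℱ.le n) (h.measurable_history n)
    (h.measurable (n + 1)) (h.condExp_next n) (measurable_chordWeight planeOrientation)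
    (h.integrable_chordWeight n (n + 1))
  calc ∫ ω, historyWeight x (n + 1) ω ∂μ
      ≤ ∫ ω, chordWeight planeOrientation (history x n ω) (x (n + 1) ω) ∂μ :=
        integral_mono (h.integrable_chordWeight _ _) (h.integrable_chordWeight _ _) fun ω =>
          chordWeight_le_of_range_subset _ (range_history_subset_succ x n ω) _
    _ = ∫ ω, ∫ y, chordWeight planeOrientation (history x n ω) y ∂rancherStep x n ω ∂μ := by
        rw [← integral_condExp (ℱ.le n)]
        exact integral_congr_ae hcond
    _ ≤ ∫ ω, (1 - 1 / 10 ^ 6) * historyWeight x n ω ∂μ :=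
        integral_mono (integrable_condExp.congr hcond)
          ((h.integrable_chordWeight n n).const_mul _) (integral_chordWeight_rancherStep_le x n)
    _ = (1 - 1 / 10 ^ 6) * ∫ ω, historyWeight x n ω ∂μ := integral_const_mul _ _

theorem integral_historyWeight_le (h : IsRancherProcess ℱ x μ) (n : ℕ) :
    ∫ ω, historyWeight x n ω ∂μ ≤ (∫ ω, historyWeight x 0 ω ∂μ) * (1 - 1 / 10 ^ 6) ^ n := by
  rw [mul_comm]
  exact le_geom (u := fun n => ∫ ω, historyWeight x n ω ∂μ) (by norm_num) n
    fun k _ => h.integral_historyWeight_succ_le k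

theorem ae_eventually_lt_maxChordPotential (h : IsRancherProcess ℱ x μ) :
    ∀ᵐ ω ∂μ, ∀ᶠ n : ℕ in atTop,
      (n : ℝ) / 100 < maxChordPotential planeOrientation (history x n ω) (x n ω) := by
  have hrate : (1 - 1 / 10 ^ 6 : ℝ) < exp (-(1 / 20000) / 100) := by
    linarith [add_one_le_exp (-(1 / 20000) / 100 : ℝ)]
  filter_upwards [ae_eventually_lt_pow_of_integral_le (fun n ω => chordWeight_nonneg _ _ _)
    (fun n => h.integrable_chordWeight n n) (by norm_num) hrate h.integral_historyWeight_le]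
    with ω hω
  filter_upwards [hω] with n hn
  rw [← exp_nat_mul, chordWeight, exp_lt_exp] at hn
  linarith

theorem ae_forall_dist_succ_eq_one (h : IsRancherProcess ℱ x μ) :
    ∀ᵐ ω ∂μ, ∀ n, dist (x n ω) (x (n + 1) ω) = 1 :=
  ae_all_iff.mpr fun n => ae_prodMk_mem_of_condExp (ℱ.le n) (h.adapted n) (h.measurable (n + 1))
    (h.condExp_next n) (S := {q | dist q.1 q.2 = 1})
    (measurableSet_eq_fun measurable_dist measurable_const) (ae_rancherStep_dist_eq_one x n)

end IsRancherProcess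

theorem exists_le_norm_of_lt_maxChordPotential {n : ℕ} {ω : Ω}
    (h : (n : ℝ) / 100 < maxChordPotential planeOrientation (history x n ω) (x n ω)) :
    ∃ i ≤ n, 1 / 7000 * (n : ℝ) ≤ ‖x i ω‖ := by
  by_contra! hlt
  have := maxChordPotential_le_of_norm_le planeOrientation (h := history x n ω)
    (fun i => (hlt i (Nat.le_of_lt_succ i.isLt)).le) (hlt n le_rfl).le
  linarith

theorem rancher_positive_limsup_speed_general [IsFiniteMeasure μ] (h : IsRancherProcess ℱ x μ) :
    ∀ᵐ ω ∂μ, 1 / 7000 ≤ atTop.limsup fun n => ‖x n ω‖ / n := by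
  filter_upwards [h.ae_eventually_lt_maxChordPotential, h.ae_forall_dist_succ_eq_one]
    with ω hpotential hdist
  exact le_limsup_div_natCast (by norm_num) (norm_le_norm_zero_add_of_dist_succ_eq_one hdist)
    (hpotential.mono fun n => exists_le_norm_of_lt_maxChordPotential)

end RancherProcess

/-- Theorem 1: the planar rancher escapes at a positive limsup speed:
there is `s > 0` with `limsup ‖xₙ‖ / n ≥ s` almost surely.

The rancher process is described by: a filtration `ℱ` with `ℱ n` generated by
`x₀, …, xₙ`; the starting point `x₀ = 0`; and the requirement that the
conditional law of `x_{n+1}` given `ℱ n` is the uniform measure on the allowed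
arcs, expressed by the condition that for every bounded measurable test
function `g`, the conditional expectation of `g (x_{n+1})` given `ℱ n` is
a.s. the integral of `g` against `rancherStep x n ω`. -/
theorem rancher_positive_limsup_speed {Ω : Type*} {m0 : MeasurableSpace Ω}
    {μ : Measure Ω} [IsProbabilityMeasure μ] (ℱ : Filtration ℕ m0)
    (x : ℕ → Ω → EuclideanSpace ℝ (Fin 2))
    (hx : ∀ n, Measurable (x n))
    (hfilt : ∀ n, (ℱ n : MeasurableSpace Ω) =
      ⨆ i : Fin (n + 1), MeasurableSpace.comap (x i)
        (inferInstance : MeasurableSpace (EuclideanSpace ℝ (Fin 2))))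
    (hx0 : ∀ ω, x 0 ω = 0)
    (hcond : ∀ (n : ℕ) (g : EuclideanSpace ℝ (Fin 2) → ℝ), Measurable g →
      (∀ y, |g y| ≤ 1) →
      (μ[fun ω => g (x (n + 1) ω) | ℱ n] =ᵐ[μ]
        fun ω => ∫ y, g y ∂(rancherStep x n ω))) :
    ∃ s : ℝ, 0 < s ∧
      ∀ᵐ ω ∂μ, s ≤ atTop.limsup fun n => ‖x n ω‖ / n := by
  refine ⟨1 / 7000, by norm_num, rancher_positive_limsup_speed_general (ℱ := ℱ)
    ⟨fun n => ?_, fun n s hs => ?_⟩⟩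
  · rw [hfilt n]
    exact (comap_measurable (x n)).mono
      (le_iSup (fun i : Fin (n + 1) => MeasurableSpace.comap (x i) inferInstance) (Fin.last n))
      le_rfl
  · have hindicator := hcond n (s.indicator fun _ => 1) (measurable_const.indicator hs) fun y => by
      by_cases hy : y ∈ s <;> simp [hy]
    simp only [integral_indicator_const _ hs, smul_eq_mul, mul_one] at hindicator
    exact hindicator
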